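/- arXiv:0906.4152 — 4 statements merged into one kernel-verified Lean document; each statement's English description precedes it below -/
import Mathlib

section
/- Consider a commutative ladder of abelian groups: a top row A₁ →f₁ A₂ →f₂ A₃ →f₃ A₄ →f₄ A₅ and a bottom row B₁ →h₁ B₂ →h₂ B₃ →h₃ B₄ →h₄ B₅ of group homomorphisms, with vertical homomorphisms i₁, i₂, i₃, i₄, i₅ making all four squares commute. Assume the top row is exact at A₂, A₃ and A₄, the bottom row is exact at B₂, B₃ and B₄, that i₁ and i₄ are bijective, and that i₂ and i₅ are injective. Then: (a) the homomorphism h₂ induces a group isomorphism B₂/im(i₂) → B₃/im(i₃) sending the class of b to the class of h₂(b); and (b) if the injection i₂ admits a retraction (equivalently, the short exact sequence 0 → A₂ → B₂ → B₂/im(i₂) → 0 splits), then the injection i₃ admits a retraction (equivalently, 0 → A₃ → B₃ → B₃/im(i₃) → 0 splits). -/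
/-- Lemma 7(ii): in a commutative ladder of abelian groups with the top row exact
at `A₂`, `A₃`, `A₄` and the bottom row exact at `B₂`, `B₃`, `B₄`, with `i₁`, `i₄`
bijective and `i₂`, `i₅` injective:
(a) `h₂` induces an isomorphism `B₂/im i₂ ≃ B₃/im i₃` sending `[b]` to `[h₂ b]`;
(b) if `i₂` admits a retraction (i.e. `0 → A₂ → B₂ → B₂/im i₂ → 0` splits), then
`i₃` admits a retraction (i.e. `0 → A₃ → B₃ → B₃/im i₃ → 0` splits). -/
theorem ladder_quotient_iso_and_split
    {A₁ A₂ A₃ A₄ A₅ B₁ B₂ B₃ B₄ B₅ : Type*}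
    [AddCommGroup A₁] [AddCommGroup A₂] [AddCommGroup A₃] [AddCommGroup A₄]
    [AddCommGroup A₅]
    [AddCommGroup B₁] [AddCommGroup B₂] [AddCommGroup B₃] [AddCommGroup B₄]
    [AddCommGroup B₅]
    (f₁ : A₁ →+ A₂) (f₂ : A₂ →+ A₃) (f₃ : A₃ →+ A₄) (f₄ : A₄ →+ A₅)
    (h₁ : B₁ →+ B₂) (h₂ : B₂ →+ B₃) (h₃ : B₃ →+ B₄) (h₄ : B₄ →+ B₅)
    (i₁ : A₁ →+ B₁) (i₂ : A₂ →+ B₂) (i₃ : A₃ →+ B₃) (i₄ : A₄ →+ B₄)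
    (i₅ : A₅ →+ B₅)
    (sq₁ : i₂.comp f₁ = h₁.comp i₁)
    (sq₂ : i₃.comp f₂ = h₂.comp i₂)
    (sq₃ : i₄.comp f₃ = h₃.comp i₃)
    (sq₄ : i₅.comp f₄ = h₄.comp i₄)
    (exA₂ : f₁.range = f₂.ker)
    (exA₃ : f₂.range = f₃.ker)
    (exA₄ : f₃.range = f₄.ker)
    (exB₂ : h₁.range = h₂.ker)
    (exB₃ : h₂.range = h₃.ker)
    (exB₄ : h₃.range = h₄.ker)
    (hi₁ : Function.Bijective i₁)
    (hi₄ : Function.Bijective i₄)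
    (hi₂ : Function.Injective i₂)
    (hi₅ : Function.Injective i₅) :
    (∃ e : (B₂ ⧸ i₂.range) ≃+ (B₃ ⧸ i₃.range),
        ∀ b : B₂, e (QuotientAddGroup.mk b) = QuotientAddGroup.mk (h₂ b)) ∧
    ((∃ r : B₂ →+ A₂, r.comp i₂ = AddMonoidHom.id A₂) →
      ∃ r : B₃ →+ A₃, r.comp i₃ = AddMonoidHom.id A₃) := by
  have c₁ : ∀ x, i₂ (f₁ x) = h₁ (i₁ x) := fun x => DFunLike.congr_fun sq₁ x
  have c₂ : ∀ x, i₃ (f₂ x) = h₂ (i₂ x) := fun x => DFunLike.congr_fun sq₂ x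
  have c₃ : ∀ x, i₄ (f₃ x) = h₃ (i₃ x) := fun x => DFunLike.congr_fun sq₃ x
  have c₄ : ∀ x, i₅ (f₄ x) = h₄ (i₄ x) := fun x => DFunLike.congr_fun sq₄ x
  have eA₂ : ∀ x, (∃ y, f₁ y = x) ↔ f₂ x = 0 := fun x => by
    rw [← AddMonoidHom.mem_ker, ← exA₂, AddMonoidHom.mem_range]
  have eA₃ : ∀ x, (∃ y, f₂ y = x) ↔ f₃ x = 0 := fun x => by
    rw [← AddMonoidHom.mem_ker, ← exA₃, AddMonoidHom.mem_range]
  have eA₄ : ∀ x, (∃ y, f₃ y = x) ↔ f₄ x = 0 := fun x => by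
    rw [← AddMonoidHom.mem_ker, ← exA₄, AddMonoidHom.mem_range]
  have eB₂ : ∀ x, (∃ y, h₁ y = x) ↔ h₂ x = 0 := fun x => by
    rw [← AddMonoidHom.mem_ker, ← exB₂, AddMonoidHom.mem_range]
  have eB₃ : ∀ x, (∃ y, h₂ y = x) ↔ h₃ x = 0 := fun x => by
    rw [← AddMonoidHom.mem_ker, ← exB₃, AddMonoidHom.mem_range]
  have eB₄ : ∀ x, (∃ y, h₃ y = x) ↔ h₄ x = 0 := fun x => by
    rw [← AddMonoidHom.mem_ker, ← exB₄, AddMonoidHom.mem_range]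
  -- kernel of h₂ comes from f₁
  have kh : ∀ b, h₂ b = 0 → ∃ a, i₂ (f₁ a) = b := by
    intro b hb
    obtain ⟨b₁, rfl⟩ := (eB₂ b).2 hb
    obtain ⟨a, rfl⟩ := hi₁.2 b₁
    exact ⟨a, c₁ a⟩
  have hi₃ : Function.Injective i₃ := by
    rw [injective_iff_map_eq_zero]
    intro a ha
    have h0 : f₃ a = 0 := hi₄.1 (by rw [c₃, ha, map_zero, map_zero])
    obtain ⟨a₂, rfl⟩ := (eA₃ a).2 h0
    rw [c₂] at ha
    obtain ⟨a₁, h⟩ := kh _ ha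
    exact (eA₂ a₂).1 ⟨a₁, hi₂ h⟩
  have key : ∃ e : (B₂ ⧸ i₂.range) ≃+ (B₃ ⧸ i₃.range),
        ∀ b : B₂, e (QuotientAddGroup.mk b) = QuotientAddGroup.mk (h₂ b) := by
    let φ : (B₂ ⧸ i₂.range) →+ (B₃ ⧸ i₃.range) :=
      QuotientAddGroup.map i₂.range i₃.range h₂ (by
        rintro _ ⟨a, rfl⟩
        exact ⟨f₂ a, c₂ a⟩)
    have hφ : ∀ b : B₂, φ (QuotientAddGroup.mk b) = QuotientAddGroup.mk (h₂ b) :=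
      fun b => rfl
    refine ⟨AddEquiv.ofBijective φ ⟨?_, ?_⟩, hφ⟩
    · rw [injective_iff_map_eq_zero]
      intro x
      obtain ⟨b, rfl⟩ := QuotientAddGroup.mk_surjective x
      rw [hφ, QuotientAddGroup.eq_zero_iff, QuotientAddGroup.eq_zero_iff]
      rintro ⟨a, ha⟩
      have h0 : f₃ a = 0 := hi₄.1 (by rw [c₃, ha, map_zero]; exact (eB₃ _).1 ⟨b, rfl⟩)
      obtain ⟨a₂, rfl⟩ := (eA₃ a).2 h0
      obtain ⟨a₁, h⟩ := kh (b - i₂ a₂) (by rw [map_sub, ← c₂, ha, sub_self])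
      exact ⟨f₁ a₁ + a₂, by rw [map_add, h, sub_add_cancel]⟩
    · intro y
      obtain ⟨b, rfl⟩ := QuotientAddGroup.mk_surjective y
      obtain ⟨a₄, h4⟩ := hi₄.2 (h₃ b)
      have h0 : f₄ a₄ = 0 := hi₅ (by rw [c₄, h4, map_zero]; exact (eB₄ _).1 ⟨b, rfl⟩)
      obtain ⟨a₃, rfl⟩ := (eA₄ a₄).2 h0
      obtain ⟨b₂, h⟩ := (eB₃ (b - i₃ a₃)).2 (by rw [map_sub, ← c₃, h4, sub_self])
      refine ⟨QuotientAddGroup.mk b₂, ?_⟩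
      rw [hφ, h, QuotientAddGroup.eq]
      exact ⟨a₃, by abel⟩
  refine ⟨key, ?_⟩
  obtain ⟨e, he⟩ := key
  rintro ⟨r, hr⟩
  have hr' : ∀ a, r (i₂ a) = a := fun a => DFunLike.congr_fun hr a
  let s : (B₂ ⧸ i₂.range) →+ B₂ :=
    QuotientAddGroup.lift i₂.range (AddMonoidHom.id B₂ - i₂.comp r) (by
      rintro _ ⟨a, rfl⟩
      simp [hr'])
  have hs : ∀ b : B₂, s (QuotientAddGroup.mk b) = b - i₂ (r b) := fun b => rfl
  let S : B₃ →+ B₃ :=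
    h₂.comp (s.comp (e.symm.toAddMonoidHom.comp (QuotientAddGroup.mk' i₃.range)))
  have hS : ∀ b : B₃, S b = h₂ (s (e.symm (QuotientAddGroup.mk b))) := fun b => rfl
  have hS0 : ∀ a, S (i₃ a) = 0 := by
    intro a
    rw [hS, (QuotientAddGroup.eq_zero_iff (N := i₃.range) (i₃ a)).2 ⟨a, rfl⟩]
    simp
  have hmem : ∀ b, (AddMonoidHom.id B₃ - S) b ∈ i₃.range := by
    intro b
    obtain ⟨b₂, h⟩ := QuotientAddGroup.mk_surjective (e.symm (QuotientAddGroup.mk b))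
    have h' : (QuotientAddGroup.mk (h₂ b₂) : B₃ ⧸ i₃.range) = QuotientAddGroup.mk b := by
      rw [← he, h, AddEquiv.apply_symm_apply]
    obtain ⟨a, ha⟩ := QuotientAddGroup.eq.1 h'
    refine ⟨a + f₂ (r b₂), ?_⟩
    rw [AddMonoidHom.sub_apply, AddMonoidHom.id_apply, hS, ← h, hs, map_add, ha, c₂, map_sub]
    abel
  let E := AddMonoidHom.ofInjective hi₃
  refine ⟨E.symm.toAddMonoidHom.comp ((AddMonoidHom.id B₃ - S).codRestrict i₃.range hmem), ?_⟩
  ext a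
  change E.symm _ = a
  rw [AddEquiv.symm_apply_eq]
  apply Subtype.ext
  change i₃ a - S (i₃ a) = i₃ a
  rw [hS0, sub_zero]
end

section
/- Let I_W ⊆ ℚ[y,z] be the ideal generated by g₃ = 8y³ − 15y²z + 9yz² − 2z³, g₄ = y³z, and g₆ = y⁶. Then y⁵ ∉ I_W. -/
open MvPolynomial

/-- The variable `y` in `ℚ[y,z]`. -/
noncomputable def y : MvPolynomial (Fin 2) ℚ := X 0
/-- The variable `z` in `ℚ[y,z]`. -/
noncomputable def z : MvPolynomial (Fin 2) ℚ := X 1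

/-- `g₃ = 8y³ − 15y²z + 9yz² − 2z³`. -/
noncomputable def g₃ : MvPolynomial (Fin 2) ℚ := 8*y^3 - 15*y^2*z + 9*y*z^2 - 2*z^3
/-- `g₄ = y³z`. -/
noncomputable def g₄ : MvPolynomial (Fin 2) ℚ := y^3*z
/-- `g₆ = y⁶`. -/
noncomputable def g₆ : MvPolynomial (Fin 2) ℚ := y^6

/-- The ideal `I_W = ⟨g₃, g₄, g₆⟩` presenting `H^*(W;ℚ)`, the rational cohomology
of the variety `W` of complete conics on `ℙ²`. -/
noncomputable def I_W : Ideal (MvPolynomial (Fin 2) ℚ) := Ideal.span {g₃, g₄, g₆}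

/-- Exponent vector `(a, b)`. -/
noncomputable def expo (a b : ℕ) : Fin 2 →₀ ℕ := Finsupp.single 0 a + Finsupp.single 1 b

theorem yz_eq (i j : ℕ) : y^i*z^j = monomial (expo i j) (1:ℚ) := by
  simp [y, z, expo, X_pow_eq_monomial, monomial_mul]

theorem coeff_yz (a b i j : ℕ) (p : MvPolynomial (Fin 2) ℚ) (c : ℚ) :
    coeff (expo a b) (p * (C c * (y^i*z^j))) =
      if i ≤ a ∧ j ≤ b then c * coeff (expo (a-i) (b-j)) p else 0 := by
  have h1 : expo i j ≤ expo a b ↔ i ≤ a ∧ j ≤ b := by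
    simp [Finsupp.le_def, Fin.forall_fin_two, expo]
  have h2 : expo a b - expo i j = expo (a-i) (b-j) := by
    ext k
    fin_cases k <;> simp [expo]
  rw [yz_eq, C_mul_monomial, coeff_mul_monomial']
  simp only [h1, h2, mul_one, mul_comm]

/-- The integration functional. -/
noncomputable def phi (p : MvPolynomial (Fin 2) ℚ) : ℚ :=
  coeff (expo 5 0) p + 4 * coeff (expo 2 3) p + 18 * coeff (expo 1 4) p + 51 * coeff (expo 0 5) p

theorem phi_add (p q : MvPolynomial (Fin 2) ℚ) : phi (p + q) = phi p + phi q := by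
  simp only [phi, coeff_add]; ring

theorem phi_g3 (p : MvPolynomial (Fin 2) ℚ) : phi (p * g₃) = 0 := by
  have h : p * g₃ = p * (C 8 * (y^3*z^0)) + p * (C (-15) * (y^2*z^1)) + p * (C 9 * (y^1*z^2))
      + p * (C (-2) * (y^0*z^3)) := by
    simp only [g₃, map_neg, map_ofNat]; ring
  rw [h]
  simp only [phi, coeff_add, coeff_yz]
  norm_num
  ring

theorem phi_g4 (p : MvPolynomial (Fin 2) ℚ) : phi (p * g₄) = 0 := by
  have h : p * g₄ = p * (C 1 * (y^3*z^1)) := by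
    simp only [g₄, map_one]; ring
  rw [h]
  simp only [phi, coeff_yz]
  norm_num

theorem phi_g6 (p : MvPolynomial (Fin 2) ℚ) : phi (p * g₆) = 0 := by
  have h : p * g₆ = p * (C 1 * (y^6*z^0)) := by
    simp only [g₆, map_one]; ring
  rw [h]
  simp only [phi, coeff_yz]
  norm_num

theorem phi_y5 : phi (y^5) = 1 := by
  have h : y^5 = 1 * (C 1 * (y^5*z^0)) := by
    simp only [map_one]; ring
  rw [h]
  simp only [phi, coeff_yz]
  norm_num [expo]

/-- `y⁵ ∉ I_W`: the top characteristic `∫_W y⁵ = 1` is nonzero. -/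
theorem y_pow_five_not_mem : y^5 ∉ I_W := by
  intro h
  rw [I_W, Ideal.mem_span_insert] at h
  obtain ⟨a, w, hw, h⟩ := h
  rw [Ideal.mem_span_pair] at hw
  obtain ⟨b, c, rfl⟩ := hw
  have := congrArg phi h
  rw [phi_y5, phi_add, phi_add, phi_g3, phi_g4, phi_g6] at this
  norm_num at this
end

section
/- Let I_W ⊆ ℚ[y,z] be the ideal generated by g₃ = 8y³ − 15y²z + 9yz² − 2z³, g₄ = y³z, and g₆ = y⁶. Then y²z³ − 4y⁵ ∈ I_W, yz⁴ − 18y⁵ ∈ I_W, and z⁵ − 51y⁵ ∈ I_W. -/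
open MvPolynomial

/-- `∫_W y²z³ = 4`, `∫_W yz⁴ = 18`, `∫_W z⁵ = 51`. -/
theorem characteristics_W :
    y^2*z^3 - 4*y^5 ∈ I_W ∧ y*z^4 - 18*y^5 ∈ I_W ∧ z^5 - 51*y^5 ∈ I_W := by
  have hc : (2 : MvPolynomial (Fin 2) ℚ) * C (1/2) = 1 := by
    rw [show (2 : MvPolynomial (Fin 2) ℚ) = C 2 from (map_ofNat C 2).symm, ← C_mul]
    norm_num
  generalize (C (1/2) : MvPolynomial (Fin 2) ℚ) = c at hc
  have h3 : g₃ ∈ I_W := Ideal.subset_span (by simp)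
  have h4 : g₄ ∈ I_W := Ideal.subset_span (by simp)
  have h1 : y^2*z^3 - 4*y^5 ∈ I_W := by
    have e : y^2*z^3 - 4*y^5 = (-c*y^2) * g₃ + (c*(9*z-15*y)) * g₄ := by
      unfold g₃ g₄
      linear_combination (-(y^2*z^3 - 4*y^5)) * hc
    rw [e]
    exact add_mem (Ideal.mul_mem_left _ _ h3) (Ideal.mul_mem_left _ _ h4)
  have h2 : y*z^4 - 18*y^5 ∈ I_W := by
    have e : y*z^4 - 18*y^5 = (-c*y*z) * g₃ + (c*(8*y-15*z)) * g₄
        + (c*9) * (y^2*z^3 - 4*y^5) := by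
      unfold g₃ g₄
      linear_combination (-(y*z^4 - 18*y^5)) * hc
    rw [e]
    exact add_mem (add_mem (Ideal.mul_mem_left _ _ h3) (Ideal.mul_mem_left _ _ h4))
      (Ideal.mul_mem_left _ _ h1)
  refine ⟨h1, h2, ?_⟩
  have e : z^5 - 51*y^5 = (-c*z^2) * g₃ + (c*8*z) * g₄
      + (c*(-15)) * (y^2*z^3 - 4*y^5) + (c*9) * (y*z^4 - 18*y^5) := by
    unfold g₃ g₄
    linear_combination (-(z^5 - 51*y^5)) * hc
  rw [e]
  exact add_mem (add_mem (add_mem (Ideal.mul_mem_left _ _ h3) (Ideal.mul_mem_left _ _ h4))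
    (Ideal.mul_mem_left _ _ h1)) (Ideal.mul_mem_left _ _ h2)
end

section
/- Let I_W ⊆ ℚ[y,z] be the ideal generated by g₃ = 8y³ − 15y²z + 9yz² − 2z³, g₄ = y³z, and g₆ = y⁶. Then (6y − 2z)⁵ − 3264·y⁵ ∈ I_W. -/
open MvPolynomial

/-- The five-conic problem: `∫_W (6y−2z)⁵ = 3264`. -/
theorem five_conic : (6*y - 2*z)^5 - 3264*y^5 ∈ I_W := by
  have h3 : g₃ ∈ I_W := Ideal.subset_span (by simp)
  have h4 : g₄ ∈ I_W := Ideal.subset_span (by simp)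
  have h : (6*y - 2*z)^5 - 3264*y^5
      = (564*y^2 - 168*y*z + 16*z^2) * g₃ + (916*z - 3156*y) * g₄ := by
    unfold g₃ g₄
    ring
  rw [h]
  exact I_W.add_mem (I_W.mul_mem_left _ h3) (I_W.mul_mem_left _ h4)
end
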